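/- Let a > 0, L > 0, α > 0, and let G_n^a denote the Gegenbauer polynomial of degree n and order a. Define the fractional rational Gegenbauer function FRG_n^a(L, α, x) = G_n^a((x^α − L)/(x^α + L)) for x > 0 and the weight w(x) = (1 − ((x^α − L)/(x^α + L))²)^{a − 1/2} · 2αL x^{α−1}/(x^α + L)². Then for all integers n, m ≥ 0, ∫₀^∞ FRG_n^a(L, α, x) · FRG_m^a(L, α, x) · w(x) dx = (π 2^{1−2a} Γ(n + 2a))/(n! (n + a) Γ(a)²) · δ_{nm}, where δ_{nm} is the Kronecker delta. -/

import Mathlib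

open MeasureTheory

/-- The Gegenbauer polynomial of degree `n` and order `a`, defined by the
explicit sum `G_n^a(x) = Σ_{j=0}^{⌊n/2⌋} (−1)^j Γ(n+a−j)/(j!(n−2j)!Γ(a)) (2x)^{n−2j}`. -/
noncomputable def Geg (a : ℝ) (n : ℕ) (x : ℝ) : ℝ :=
  ∑ j ∈ Finset.range (n / 2 + 1),
    (-1 : ℝ) ^ j * Real.Gamma ((n : ℝ) + a - (j : ℝ)) /
      ((Nat.factorial j : ℝ) * (Nat.factorial (n - 2 * j) : ℝ) * Real.Gamma a) *
      (2 * x) ^ (n - 2 * j)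

/-- The fractional rational Gegenbauer function `FRG_n^a(L, α, x) = G_n^a((x^α − L)/(x^α + L))`. -/
noncomputable def FRG (a L α : ℝ) (n : ℕ) (x : ℝ) : ℝ :=
  Geg a n ((x ^ α - L) / (x ^ α + L))

/-- The weight `w(x) = (1 − ((x^α − L)/(x^α + L))²)^{a−1/2} · 2αL x^{α−1}/(x^α + L)²`. -/
noncomputable def FRGweight (a L α : ℝ) (x : ℝ) : ℝ :=
  (1 - ((x ^ α - L) / (x ^ α + L)) ^ 2) ^ (a - 1 / 2) *
    (2 * α * L * x ^ (α - 1) / (x ^ α + L) ^ 2)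

/-!
The argument is a ladder in the order `a`. Differentiation sends `G_{n+1}^a` to `2a G_n^{a+1}`,
while the Gegenbauer equation says that the operator `q ↦ (1 - t²) q' - (2a + 1) t q`, which is
minus the adjoint of differentiation between the spaces weighted by `(1 - t²)^(a - 1/2)` and
`(1 - t²)^(a + 1/2)`, sends `G_n^{a+1}` back to a multiple of `G_{n+1}^a`. Hence the inner product
of `G_{n+1}^a` and `G_{m+1}^a` is a multiple of that of `G_n^{a+1}` and `G_m^{a+1}`, and descending
to degree zero leaves either zero or a beta integral, which the duplication formula evaluates.
The substitutions `y = x^α` and `t = (y - L) / (y + L)` carry `(0, ∞)` to `(-1, 1)`.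
-/

open Polynomial

section Polynomial

theorem coeff_X_mul_derivative {R : Type*} [CommSemiring R] (p : R[X]) (k : ℕ) :
    (X * derivative p).coeff k = k * p.coeff k := by
  cases k with
  | zero => simp
  | succ k => rw [coeff_X_mul, coeff_derivative, Nat.cast_succ, mul_comm]

variable {K : Type*} [Field K]

/-- The Gegenbauer (ultraspherical) polynomial of degree `n` and order `a` over a field. The ratio
`Γ(n + a - j) / Γ(a)` of the classical formula is encoded as the Pochhammer symbol `(a)_{n-j}`, so
that no value of `a` is exceptional. -/
noncomputable def gegenbauer (a : K) (n : ℕ) : K[X] :=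
  ∑ j ∈ Finset.range (n / 2 + 1),
    C ((-1) ^ j * (ascPochhammer K (n - j)).eval a / (j.factorial * (n - 2 * j).factorial)) *
      (C 2 * X) ^ (n - 2 * j)

theorem gegenbauer_zero (a : K) : gegenbauer a 0 = 1 := by
  simp [gegenbauer]

theorem coeff_gegenbauer (a : K) (n k : ℕ) :
    (gegenbauer a n).coeff k = ∑ j ∈ Finset.range (n / 2 + 1), if k = n - 2 * j then
      (-1) ^ j * (ascPochhammer K (n - j)).eval a / (j.factorial * k.factorial) * 2 ^ k else 0 := by
  simp only [gegenbauer, finsetSum_coeff, mul_pow, ← C_pow, coeff_C_mul, coeff_X_pow]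
  refine Finset.sum_congr rfl fun j _ => ?_
  split_ifs with h
  · rw [h, mul_one]
  · rw [mul_zero, mul_zero]

theorem coeff_gegenbauer_add_two_mul (a : K) (k j : ℕ) :
    (gegenbauer a (k + 2 * j)).coeff k =
      (-1) ^ j * (ascPochhammer K (k + j)).eval a / (j.factorial * k.factorial) * 2 ^ k := by
  rw [coeff_gegenbauer, Finset.sum_eq_single_of_mem j (Finset.mem_range.2 (by omega)),
    if_pos (by omega), show k + 2 * j - j = k + j by omega]
  intro i hi hij
  have := Finset.mem_range.1 hi
  exact if_neg (by omega)

theorem coeff_gegenbauer_eq_zero (a : K) {n k : ℕ} (h : ∀ j, n ≠ k + 2 * j) :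
    (gegenbauer a n).coeff k = 0 := by
  rw [coeff_gegenbauer]
  refine Finset.sum_eq_zero fun j hj => if_neg fun hk => h j ?_
  have := Finset.mem_range.1 hj
  omega

variable [CharZero K]

theorem derivative_gegenbauer_succ (a : K) (n : ℕ) :
    derivative (gegenbauer a (n + 1)) = C (2 * a) * gegenbauer (a + 1) n := by
  ext k
  rw [coeff_derivative, coeff_C_mul]
  by_cases h : ∃ j, n = k + 2 * j
  · obtain ⟨j, rfl⟩ := h
    have pochhammer_succ : (ascPochhammer K (k + j + 1)).eval a =
        a * (ascPochhammer K (k + j)).eval (a + 1) := by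
      simp [ascPochhammer_succ_left]
    rw [add_right_comm, coeff_gegenbauer_add_two_mul, coeff_gegenbauer_add_two_mul,
      add_right_comm, pochhammer_succ, Nat.factorial_succ]
    push_cast
    field_simp
    ring
  · push Not at h
    rw [coeff_gegenbauer_eq_zero a fun j hj => h j (by omega), coeff_gegenbauer_eq_zero _ h]
    ring

theorem coeff_gegenbauer_add_two (a : K) (n k : ℕ) :
    (k + 1) * (k + 2) * (gegenbauer a n).coeff (k + 2) =
      (k - n) * (k + n + 2 * a) * (gegenbauer a n).coeff k := by
  by_cases h : ∃ j, n = k + 2 * j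
  · obtain ⟨_ | j, rfl⟩ := h
    · rw [coeff_gegenbauer_eq_zero a fun i => by omega]
      simp
    · have degree_eq : k + 2 * (j + 1) = k + 2 + 2 * j := by ring
      rw [coeff_gegenbauer_add_two_mul, degree_eq, coeff_gegenbauer_add_two_mul,
        show k + 2 + j = k + (j + 1) + 1 by ring, ascPochhammer_succ_eval,
        Nat.factorial_succ (k + 1), Nat.factorial_succ k, Nat.factorial_succ j]
      have add_two_ne_zero : (k : K) + 1 + 1 ≠ 0 := by exact_mod_cast (k + 1).succ_ne_zero
      push_cast
      field_simp
      ring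
  · push Not at h
    rw [coeff_gegenbauer_eq_zero a fun j hj => h (j + 1) (by omega), coeff_gegenbauer_eq_zero a h]
    ring

theorem gegenbauer_ode (a : K) (n : ℕ) :
    (1 - X ^ 2) * derivative (derivative (gegenbauer a n)) -
        C (2 * a + 1) * X * derivative (gegenbauer a n) =
      -(C (n * (n + 2 * a)) * gegenbauer a n) := by
  set p := gegenbauer a n
  -- The Euler operator `X * d/dX` is diagonal on monomials, so only the first term shifts degree.
  have euler_form : derivative (derivative p) - X * derivative (X * derivative p) -
      C (2 * a) * (X * derivative p) = -(C (n * (n + 2 * a)) * p) := by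
    ext k
    simp only [coeff_sub, coeff_neg, coeff_C_mul, coeff_X_mul_derivative, coeff_derivative]
    push_cast
    linear_combination coeff_gegenbauer_add_two a n k
  rw [← euler_form, derivative_mul, derivative_X, C_add, C_1]
  ring

end Polynomial

theorem ne_neg_natCast {a : ℝ} (ha : -1 < a) (ha₀ : a ≠ 0) (k : ℕ) : a ≠ -k := by
  rcases k.eq_zero_or_pos with rfl | hk
  · simpa using ha₀
  · have : (1 : ℝ) ≤ k := by exact_mod_cast hk
    linarith

theorem Gamma_add_natCast_div_Gamma {a : ℝ} (ha : ∀ k : ℕ, a ≠ -k) (n : ℕ) :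
    Real.Gamma (a + n) / Real.Gamma a = (ascPochhammer ℝ n).eval a := by
  have h := Complex.Gamma_add_nat_div_Gamma_eq (n := n) (a : ℂ) fun k => by exact_mod_cast ha k
  rw [← ascPochhammer_map Complex.ofRealHom, eval_map, ← Complex.ofRealHom_eq_coe,
    eval₂_at_apply] at h
  simpa only [Complex.ofRealHom_eq_coe, ← Complex.ofReal_natCast, ← Complex.ofReal_add,
    Complex.Gamma_ofReal, ← Complex.ofReal_div, Complex.ofReal_inj] using h

theorem eval_gegenbauer {a : ℝ} (ha : ∀ k : ℕ, a ≠ -k) (n : ℕ) (x : ℝ) :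
    (gegenbauer a n).eval x = Geg a n x := by
  simp only [gegenbauer, Geg, eval_finsetSum, eval_mul, eval_C, eval_pow, eval_X]
  refine Finset.sum_congr rfl fun j hj => ?_
  have hjn : j ≤ n := by have := Finset.mem_range.1 hj; omega
  rw [← Gamma_add_natCast_div_Gamma ha, Nat.cast_sub hjn,
    show a + (n - j : ℝ) = n + a - j by ring]
  ring

section Weight

theorem integral_rpow_mul_one_sub_rpow {u v : ℝ} (hu : 0 < u) (hv : 0 < v) :
    ∫ x in (0 : ℝ)..1, x ^ (u - 1) * (1 - x) ^ (v - 1) = ProbabilityTheory.beta u v := by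
  rw [ProbabilityTheory.beta_eq_betaIntegralReal u v hu hv, Complex.betaIntegral,
    ← Complex.ofReal_re (∫ x in (0 : ℝ)..1, _), ← intervalIntegral.integral_ofReal]
  congr 1
  refine intervalIntegral.integral_congr fun x hx => ?_
  rw [Set.uIcc_of_le zero_le_one] at hx
  push_cast [Complex.ofReal_cpow hx.1, Complex.ofReal_cpow (sub_nonneg.2 hx.2)]
  rfl

theorem integral_one_sub_sq_rpow {s : ℝ} (hs : 0 < s) :
    ∫ t in (-1 : ℝ)..1, (1 - t ^ 2) ^ (s - 1) =
      2 ^ (2 * s - 1) * ProbabilityTheory.beta s s := by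
  have affine : 2 * ∫ u in (0 : ℝ)..1, (1 - (2 * u - 1) ^ 2) ^ (s - 1) =
      ∫ t in (-1 : ℝ)..1, (1 - t ^ 2) ^ (s - 1) := by
    rw [← smul_eq_mul,
      intervalIntegral.smul_integral_comp_mul_sub (fun t : ℝ => (1 - t ^ 2) ^ (s - 1)) 2 1]
    norm_num only
  have two_rpow : (2 : ℝ) ^ (2 * s - 1) = 2 * 4 ^ (s - 1) := by
    rw [show (4 : ℝ) = 2 ^ (2 : ℝ) by norm_num, ← Real.rpow_mul zero_le_two,
      show 2 * s - 1 = 1 + 2 * (s - 1) by ring, Real.rpow_add zero_lt_two, Real.rpow_one]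
  rw [← affine, two_rpow, mul_assoc, ← integral_rpow_mul_one_sub_rpow hs hs]
  congr 1
  rw [← intervalIntegral.integral_const_mul]
  refine intervalIntegral.integral_congr fun u hu => ?_
  rw [Set.uIcc_of_le zero_le_one] at hu
  have hu' : 0 ≤ 1 - u := sub_nonneg.2 hu.2
  rw [← Real.mul_rpow hu.1 hu', ← Real.mul_rpow zero_le_four (mul_nonneg hu.1 hu')]
  ring_nf

theorem intervalIntegrable_one_sub_sq_rpow {s : ℝ} (hs : 0 < s) :
    IntervalIntegrable (fun t : ℝ => (1 - t ^ 2) ^ (s - 1)) volume (-1) 1 := by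
  apply intervalIntegral.intervalIntegrable_of_integral_ne_zero
  rw [integral_one_sub_sq_rpow hs]
  exact (mul_pos (by positivity) (ProbabilityTheory.beta_pos hs hs)).ne'

/-- The integral of a polynomial against the Gegenbauer weight `(1 - t²)^(a - 1/2)` of order `a`.
It is finite for `-1/2 < a`. -/
noncomputable def gegenbauerIntegral (a : ℝ) (p : ℝ[X]) : ℝ :=
  ∫ t in (-1 : ℝ)..1, p.eval t * (1 - t ^ 2) ^ (a - 1 / 2)

variable {a : ℝ}

theorem intervalIntegrable_eval_mul_weight (ha : -1 / 2 < a) (p : ℝ[X]) :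
    IntervalIntegrable (fun t => p.eval t * (1 - t ^ 2) ^ (a - 1 / 2)) volume (-1) 1 := by
  have weight := intervalIntegrable_one_sub_sq_rpow (s := a + 1 / 2) (by linarith)
  rw [show a + 1 / 2 - 1 = a - 1 / 2 by ring] at weight
  exact weight.continuousOn_mul p.continuous.continuousOn

theorem gegenbauerIntegral_C_mul (a c : ℝ) (p : ℝ[X]) :
    gegenbauerIntegral a (C c * p) = c * gegenbauerIntegral a p := by
  simp only [gegenbauerIntegral, eval_mul, eval_C, mul_assoc, intervalIntegral.integral_const_mul]

theorem gegenbauerIntegral_sub (ha : -1 / 2 < a) (p q : ℝ[X]) :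
    gegenbauerIntegral a (p - q) = gegenbauerIntegral a p - gegenbauerIntegral a q := by
  simp only [gegenbauerIntegral, eval_sub, sub_mul]
  exact intervalIntegral.integral_sub (intervalIntegrable_eval_mul_weight ha p)
    (intervalIntegrable_eval_mul_weight ha q)

theorem one_sub_sq_rpow_add_half (ha : -1 / 2 < a) {t : ℝ} (ht : t ∈ Set.Icc (-1 : ℝ) 1) :
    (1 - t ^ 2) ^ (a + 1 / 2) = (1 - t ^ 2) * (1 - t ^ 2) ^ (a - 1 / 2) := by
  have h : 0 ≤ 1 - t ^ 2 := by nlinarith [ht.1, ht.2]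
  rw [← Real.rpow_one_add' h (by linarith)]
  ring_nf

theorem gegenbauerIntegral_one_sub_X_sq_mul (ha : -1 / 2 < a) (p : ℝ[X]) :
    gegenbauerIntegral a ((1 - X ^ 2) * p) = gegenbauerIntegral (a + 1) p := by
  refine intervalIntegral.integral_congr fun t ht => ?_
  rw [Set.uIcc_of_le (by norm_num)] at ht
  have h := one_sub_sq_rpow_add_half ha ht
  simp only [eval_mul, eval_sub, eval_one, eval_pow, eval_X]
  rw [show a + 1 - 1 / 2 = a + 1 / 2 by ring, h]
  ring

-- The integrand is the derivative of `(1 - t²)^(a + 1/2) * p(t)`, which vanishes at `±1`.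
theorem gegenbauerIntegral_divergence (ha : -1 / 2 < a) (p : ℝ[X]) :
    gegenbauerIntegral a ((1 - X ^ 2) * derivative p - C (2 * a + 1) * X * p) = 0 := by
  have exponent_pos : 0 < a + 1 / 2 := by linarith
  have hcont : ContinuousOn (fun t : ℝ => (1 - t ^ 2) ^ (a + 1 / 2) * p.eval t)
      (Set.Icc (-1) 1) :=
    (((continuous_const.sub (continuous_pow 2)).rpow_const fun _ => Or.inr exponent_pos.le).mul
      p.continuous).continuousOn
  have hderiv (t : ℝ) (ht : t ∈ Set.Ioo (-1 : ℝ) 1) :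
      HasDerivAt (fun t : ℝ => (1 - t ^ 2) ^ (a + 1 / 2) * p.eval t)
        (((1 - X ^ 2) * derivative p - C (2 * a + 1) * X * p).eval t *
          (1 - t ^ 2) ^ (a - 1 / 2)) t := by
    have hpos : 0 < 1 - t ^ 2 := by nlinarith [ht.1, ht.2]
    have h := (((hasDerivAt_pow 2 t).const_sub 1).rpow_const (p := a + 1 / 2)
      (Or.inl hpos.ne')).mul (p.hasDerivAt t)
    refine h.congr_deriv ?_
    rw [one_sub_sq_rpow_add_half ha (Set.Ioo_subset_Icc_self ht),
      show a + 1 / 2 - 1 = a - 1 / 2 by ring]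
    simp only [eval_sub, eval_mul, eval_one, eval_pow, eval_X, eval_C]
    push_cast
    ring
  rw [gegenbauerIntegral, intervalIntegral.integral_eq_sub_of_hasDerivAt_of_le (by norm_num) hcont
    hderiv (intervalIntegrable_eval_mul_weight ha _)]
  norm_num [Real.zero_rpow exponent_pos.ne']

end Weight

section Orthogonality

variable {a : ℝ}

theorem gegenbauerIntegral_succ_mul (ha : -1 / 2 < a) (n : ℕ) (q : ℝ[X]) :
    (n + 1) * (n + 1 + 2 * a) * gegenbauerIntegral a (gegenbauer a (n + 1) * q) =
      2 * a * gegenbauerIntegral (a + 1) (gegenbauer (a + 1) n * derivative q) := by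
  set p := gegenbauer a (n + 1) with hp
  have parts := gegenbauerIntegral_divergence ha (derivative p * q)
  have integrand_eq : (1 - X ^ 2) * derivative (derivative p * q) -
      C (2 * a + 1) * X * (derivative p * q) =
      C (2 * a) * ((1 - X ^ 2) * (gegenbauer (a + 1) n * derivative q)) -
        C ((n + 1) * (n + 1 + 2 * a)) * (p * q) := by
    have ode := gegenbauer_ode a (n + 1)
    have deriv_p := derivative_gegenbauer_succ a n
    push_cast at ode
    rw [← hp] at ode deriv_p
    rw [derivative_mul]
    linear_combination q * ode + (1 - X ^ 2) * derivative q * deriv_p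
  rw [integrand_eq, gegenbauerIntegral_sub ha, gegenbauerIntegral_C_mul, gegenbauerIntegral_C_mul,
    gegenbauerIntegral_one_sub_X_sq_mul ha] at parts
  linarith

/-- The squared norm of the Gegenbauer polynomial of degree `n` and order `a` in the `L²` space of
the weight `(1 - t²)^(a - 1/2)` on `[-1, 1]`. -/
noncomputable def gegenbauerNormSq (a : ℝ) (n : ℕ) : ℝ :=
  Real.pi * 2 ^ (1 - 2 * a) * Real.Gamma (n + 2 * a) /
    (n.factorial * (n + a) * Real.Gamma a ^ 2)

theorem natCast_add_one_add_two_mul_pos (ha : -1 / 2 < a) (n : ℕ) : 0 < n + 1 + 2 * a := by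
  linarith [n.cast_nonneg (α := ℝ)]

theorem gegenbauerNormSq_succ (ha : -1 / 2 < a) (ha₀ : a ≠ 0) (n : ℕ) :
    (n + 1) * (n + 1 + 2 * a) * gegenbauerNormSq a (n + 1) =
      (2 * a) ^ 2 * gegenbauerNormSq (a + 1) n := by
  have two_rpow : (2 : ℝ) ^ (1 - 2 * a) = 4 * 2 ^ (1 - 2 * (a + 1)) := by
    rw [show 1 - 2 * a = 2 + (1 - 2 * (a + 1)) by ring, Real.rpow_add zero_lt_two]
    norm_num only
  have Gamma_succ : Real.Gamma (n + 2 * (a + 1)) =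
      (n + 1 + 2 * a) * Real.Gamma (n + 1 + 2 * a) := by
    rw [← Real.Gamma_add_one (natCast_add_one_add_two_mul_pos ha n).ne']
    ring_nf
  have denom_ne_zero : (n : ℝ) + 1 + a ≠ 0 := by
    linarith [n.cast_nonneg (α := ℝ)]
  rw [gegenbauerNormSq, gegenbauerNormSq, two_rpow, Gamma_succ, Real.Gamma_add_one ha₀,
    Nat.factorial_succ, show n + (a + 1) = n + 1 + a by ring]
  push_cast
  field_simp
  ring

theorem gegenbauerIntegral_one (ha : -1 / 2 < a) (ha₀ : a ≠ 0) :
    gegenbauerIntegral a 1 = gegenbauerNormSq a 0 := by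
  have weight_integral := integral_one_sub_sq_rpow (s := a + 1 / 2) (by linarith)
  rw [show a + 1 / 2 - 1 = a - 1 / 2 by ring, show 2 * (a + 1 / 2) - 1 = 2 * a by ring,
    ProbabilityTheory.beta, show a + 1 / 2 + (a + 1 / 2) = 2 * a + 1 by ring,
    Real.Gamma_add_one (mul_ne_zero two_ne_zero ha₀)] at weight_integral
  simp only [gegenbauerIntegral, eval_one, one_mul, weight_integral, gegenbauerNormSq,
    Nat.cast_zero, zero_add, Nat.factorial_zero, Nat.cast_one]
  have Gamma_ne_zero := Real.Gamma_ne_zero (ne_neg_natCast (by linarith) ha₀)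
  have Gamma_two_mul_ne_zero : Real.Gamma (2 * a) ≠ 0 :=
    Real.Gamma_ne_zero (ne_neg_natCast (by linarith) (mul_ne_zero two_ne_zero ha₀))
  have duplication : Real.Gamma (a + 1 / 2) =
      Real.Gamma (2 * a) * 2 ^ (1 - 2 * a) * √Real.pi / Real.Gamma a := by
    rw [← Real.Gamma_mul_Gamma_add_half, mul_div_cancel_left₀ _ Gamma_ne_zero]
  have two_rpow : (2 : ℝ) ^ (2 * a) * 2 ^ (1 - 2 * a) = 2 := by
    rw [← Real.rpow_add zero_lt_two, add_sub_cancel, Real.rpow_one]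
  rw [duplication]
  field_simp
  rw [Real.sq_sqrt Real.pi_pos.le]
  linear_combination Real.pi * two_rpow

theorem gegenbauerIntegral_gegenbauer_succ (ha : -1 / 2 < a) (n : ℕ) :
    gegenbauerIntegral a (gegenbauer a (n + 1)) = 0 := by
  have h := gegenbauerIntegral_succ_mul ha n 1
  simpa [gegenbauerIntegral, n.cast_add_one_ne_zero,
    (natCast_add_one_add_two_mul_pos ha n).ne'] using h

theorem gegenbauerIntegral_gegenbauer_mul (ha : -1 / 2 < a) (ha₀ : a ≠ 0) (n m : ℕ) :
    gegenbauerIntegral a (gegenbauer a n * gegenbauer a m) =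
      if n = m then gegenbauerNormSq a n else 0 := by
  induction n generalizing a m with
  | zero =>
    cases m with
    | zero => simp [gegenbauer_zero, gegenbauerIntegral_one ha ha₀]
    | succ m => simp [gegenbauer_zero, gegenbauerIntegral_gegenbauer_succ ha]
  | succ n ih =>
    cases m with
    | zero => simp [gegenbauer_zero, gegenbauerIntegral_gegenbauer_succ ha]
    | succ m =>
      have recursion := gegenbauerIntegral_succ_mul ha n (gegenbauer a (m + 1))
      have factor_ne_zero : ((n : ℝ) + 1) * (n + 1 + 2 * a) ≠ 0 :=
        mul_ne_zero n.cast_add_one_ne_zero (natCast_add_one_add_two_mul_pos ha n).ne'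
      rw [derivative_gegenbauer_succ, mul_left_comm, gegenbauerIntegral_C_mul,
        ih (by linarith) (by linarith)] at recursion
      apply mul_left_cancel₀ factor_ne_zero
      rw [recursion]
      simp only [Nat.add_right_cancel_iff]
      split_ifs
      · rw [gegenbauerNormSq_succ ha ha₀]
        ring
      · ring

end Orthogonality

section Substitution

theorem bijOn_sub_div_add {K : Type*} [Field K] [LinearOrder K] [IsStrictOrderedRing K] {L : K}
    (hL : 0 < L) : Set.BijOn (fun y => (y - L) / (y + L)) (Set.Ioi 0) (Set.Ioo (-1) 1) := by
  refine Set.InvOn.bijOn (f' := fun t => L * (1 + t) / (1 - t)) ⟨?_, ?_⟩ ?_ ?_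
  · intro y (hy : 0 < y)
    have : y + L ≠ 0 := by positivity
    have one_add : 1 + (y - L) / (y + L) = 2 * y / (y + L) := by field_simp; ring
    have one_sub : 1 - (y - L) / (y + L) = 2 * L / (y + L) := by field_simp; ring
    simp only [one_add, one_sub]
    field_simp
  · intro t ht
    have : 1 - t ≠ 0 := by linarith [ht.2]
    field_simp
    ring_nf
  · intro y (hy : 0 < y)
    have : 0 < y + L := by positivity
    constructor
    · rw [lt_div_iff₀ this]
      linarith
    · rw [div_lt_one this]
      linarith
  · intro t ht
    exact div_pos (mul_pos hL (by linarith [ht.1])) (by linarith [ht.2])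

theorem hasDerivAt_sub_div_add {L y : ℝ} (h : y + L ≠ 0) :
    HasDerivAt (fun y => (y - L) / (y + L)) (2 * L / (y + L) ^ 2) y := by
  refine (((hasDerivAt_id y).sub_const L).div ((hasDerivAt_id y).add_const L) h).congr_deriv ?_
  simp only [id]
  ring

variable {E : Type*} [NormedAddCommGroup E] [NormedSpace ℝ E] {L α : ℝ}

theorem integral_comp_sub_div_add (hL : 0 < L) (g : ℝ → E) :
    ∫ y in Set.Ioi 0, (2 * L / (y + L) ^ 2) • g ((y - L) / (y + L)) = ∫ t in (-1)..1, g t := by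
  have bij := bijOn_sub_div_add hL
  rw [intervalIntegral.integral_of_le (by norm_num), integral_Ioc_eq_integral_Ioo, ← bij.image_eq,
    integral_image_eq_integral_abs_deriv_smul measurableSet_Ioi (fun y (hy : 0 < y) =>
      (hasDerivAt_sub_div_add (add_pos hy hL).ne').hasDerivWithinAt) bij.injOn]
  refine setIntegral_congr_fun measurableSet_Ioi fun y (hy : 0 < y) => ?_
  rw [abs_of_nonneg (by positivity)]

theorem integral_comp_rpow_sub_div_add (hL : 0 < L) (hα : 0 < α) (g : ℝ → E) :
    ∫ x in Set.Ioi 0, (2 * α * L * x ^ (α - 1) / (x ^ α + L) ^ 2) •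
      g ((x ^ α - L) / (x ^ α + L)) = ∫ t in (-1)..1, g t := by
  rw [← integral_comp_sub_div_add hL g, ← integral_comp_rpow_Ioi_of_pos (g := fun y =>
    (2 * L / (y + L) ^ 2) • g ((y - L) / (y + L))) hα]
  simp only [smul_smul]
  congr! 3
  ring

theorem integral_FRG_mul_FRG {a : ℝ} (ha : ∀ k : ℕ, a ≠ -k) (hL : 0 < L) (hα : 0 < α) (n m : ℕ) :
    ∫ x in Set.Ioi (0 : ℝ), FRG a L α n x * FRG a L α m x * FRGweight a L α x =
      gegenbauerIntegral a (gegenbauer a n * gegenbauer a m) := by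
  rw [gegenbauerIntegral, ← integral_comp_rpow_sub_div_add hL hα]
  simp only [FRG, FRGweight, eval_mul, eval_gegenbauer ha, smul_eq_mul]
  congr! 2
  ring

end Substitution

theorem stmt_4_general (a L α : ℝ) (ha : -1 / 2 < a) (ha₀ : a ≠ 0) (hL : 0 < L) (hα : 0 < α)
    (n m : ℕ) :
    ∫ x in Set.Ioi (0 : ℝ), FRG a L α n x * FRG a L α m x * FRGweight a L α x =
      Real.pi * (2 : ℝ) ^ (1 - 2 * a) * Real.Gamma ((n : ℝ) + 2 * a) /
        ((Nat.factorial n : ℝ) * ((n : ℝ) + a) * Real.Gamma a ^ 2) *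
        (if n = m then 1 else 0) := by
  rw [integral_FRG_mul_FRG (ne_neg_natCast (by linarith) ha₀) hL hα,
    gegenbauerIntegral_gegenbauer_mul ha ha₀, mul_ite, mul_one, mul_zero, gegenbauerNormSq]

/-- Orthogonality of the fractional rational Gegenbauer functions on `(0, ∞)`:
`∫₀^∞ FRG_n FRG_m w dx = π 2^{1−2a} Γ(n+2a)/(n!(n+a)Γ(a)²) δ_{nm}`. -/
theorem stmt_4 (a L α : ℝ) (ha : 0 < a) (hL : 0 < L) (hα : 0 < α) (n m : ℕ) :
    ∫ x in Set.Ioi (0 : ℝ), FRG a L α n x * FRG a L α m x * FRGweight a L α x =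
      Real.pi * (2 : ℝ) ^ (1 - 2 * a) * Real.Gamma ((n : ℝ) + 2 * a) /
        ((Nat.factorial n : ℝ) * ((n : ℝ) + a) * Real.Gamma a ^ 2) *
        (if n = m then 1 else 0) :=
  stmt_4_general a L α (by linarith) ha.ne' hL hα n m
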